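/- In the setting of the template with P = Š_1 and the construction Ω described in the context: if f : Γ(A) → B is a homomorphism, then the map g : A → Ω(B) defined by g(u)_t = { f ∘ h^{Š} : h a homomorphism T(t) → A with h(r_t) = u } for each t ∈ 𝒯_V is a well-defined homomorphism A → Ω(B). In particular, if there is a homomorphism Γ(A) → B, then there is a homomorphism A → Ω(B). -/

import Mathlib

/-!
The construction `Γ` is functorial, so a homomorphism `h : T → A` turns `f : Γ(A) → B` into the
homomorphism `f ∘ h^Š : Γ(T) → B`. The entries of `g(u)` are made of such maps for trees `T` whose
root is sent to `u`.

Now let `(u_1, …, u_k) ∈ S^A`, and let `d` be a map on the `Š`-edges of `T(edge_S(t_1, …, t_k))`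
whose restriction to each `T(t_i)` is `f ∘ h_i^Š` with `h_i` sending the root to `u_i`. That tree is
the disjoint union of the `T(t_i)` with one more edge, the root edge, so the `h_i` glue to a
homomorphism `h` sending the root edge to `(u_1, …, u_k)`. The maps `d` and `f ∘ h^Š` agree on the
`Š`-edges of the subtrees; if `S = Š` they also agree on the root edge as soon as `d` takes the
value `f(u_1, …, u_k)` there, which is why this value is the witness. Thus `d = f ∘ h^Š`, which
gives both defining conditions of the relation `S` of `Ω(B)`.
-/

/-- A relational signature: a type of relation symbols, each with a positive arity. -/
structure Signature : Type 1 where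
  symb : Type
  ar : symb → ℕ
  ar_pos : ∀ R, 0 < ar R

/-- A relational structure over the signature `σ`. -/
structure Struct (σ : Signature) : Type 1 where
  dom : Type
  rel : ∀ R : σ.symb, Set (Fin (σ.ar R) → dom)

variable {σ τ υ : Signature}

/-- `f` is a homomorphism of `σ`-structures from `A` to `B`. -/
def IsHom (A B : Struct σ) (f : A.dom → B.dom) : Prop :=
  ∀ R : σ.symb, ∀ x ∈ A.rel R, (fun i => f (x i)) ∈ B.rel R

/-- `A → B`: there exists a homomorphism from `A` to `B`. -/
def HomEx (A B : Struct σ) : Prop := ∃ f, IsHom A B f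

/-- Terms over `σ` whose denotation is a tree rooted in a vertex: `vertex` is a V-term, and
`pr R i ts` denotes the V-term `pr_i(edge_R(ts))`.  (An R-term `edge_R(t_1, …, t_k)` is
represented by the symbol `R` together with the tuple `ts` of V-terms.) -/
inductive VTerm (σ : Signature) : Type
  | vertex : VTerm σ
  | pr (R : σ.symb) (i : Fin (σ.ar R)) (ts : Fin (σ.ar R) → VTerm σ) : VTerm σ

/-- The domain of the tree denoted by a V-term. -/
def VTerm.domType : VTerm σ → Type
  | .vertex => PUnit
  | .pr R _ ts => (i : Fin (σ.ar R)) × (ts i).domType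

/-- The root of the tree denoted by a V-term. -/
def VTerm.root : (t : VTerm σ) → t.domType
  | .vertex => PUnit.unit
  | .pr _ i ts => ⟨i, (ts i).root⟩

/-- The domain of the tree denoted by the R-term `edge_R(ts)`: the disjoint union of the
domains of the subtrees. -/
def edgeDom (R : σ.symb) (ts : Fin (σ.ar R) → VTerm σ) : Type :=
  (i : Fin (σ.ar R)) × (ts i).domType

/-- The root edge of the tree denoted by the R-term `edge_R(ts)`. -/
def edgeRoot (R : σ.symb) (ts : Fin (σ.ar R) → VTerm σ) : Fin (σ.ar R) → edgeDom R ts :=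
  fun i => ⟨i, (ts i).root⟩

/-- The relations of the tree denoted by a V-term: the relations of the disjoint subtrees,
together with the root edge. -/
def VTerm.rel : (t : VTerm σ) → ∀ S : σ.symb, Set (Fin (σ.ar S) → t.domType)
  | .vertex, _ => ∅
  | .pr R _ ts, S =>
      {x | ∃ i : Fin (σ.ar R), ∃ y ∈ (ts i).rel S, x = fun j => ⟨i, y j⟩} ∪
      {x | ∃ h : R = S, x = fun j => edgeRoot R ts (Fin.cast (congrArg σ.ar h.symm) j)}

/-- The tree `T(t)` denoted by a V-term `t`. -/
def VTerm.tree (t : VTerm σ) : Struct σ := ⟨t.domType, t.rel⟩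

/-- The tree `T(t)` denoted by the R-term `t = edge_R(ts)`. -/
def ETerm.tree (R : σ.symb) (ts : Fin (σ.ar R) → VTerm σ) : Struct σ where
  dom := edgeDom R ts
  rel S :=
    {x | ∃ i : Fin (σ.ar R), ∃ y ∈ (ts i).rel S, x = fun j => ⟨i, y j⟩} ∪
    {x | ∃ h : R = S, x = fun j => edgeRoot R ts (Fin.cast (congrArg σ.ar h.symm) j)}

/-- The V-subterms of a V-term. -/
def VTerm.vsub : VTerm σ → Set (VTerm σ)
  | .vertex => {.vertex}
  | .pr R i ts => insert (.pr R i ts) (⋃ j, (ts j).vsub)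

/-- The S-subterms of a V-term, for each `σ`-symbol `S` (an S-term `edge_S(us)` being
represented by the tuple `us`). -/
def VTerm.esub : VTerm σ → ∀ S : σ.symb, Set (Fin (σ.ar S) → VTerm σ)
  | .vertex, _ => ∅
  | .pr R _ ts, S =>
      {us | ∃ h : R = S, us = fun j => ts (Fin.cast (congrArg σ.ar h.symm) j)} ∪
      {us | ∃ j, us ∈ (ts j).esub S}

/-- A term is either a V-term or an R-term `edge_R(ts)` for some symbol `R`. -/
def Term (σ : Signature) : Type := VTerm σ ⊕ (Σ S : σ.symb, Fin (σ.ar S) → VTerm σ)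

/-- The tree denoted by a term. -/
def Term.tree : Term σ → Struct σ
  | .inl t => t.tree
  | .inr ⟨S, ts⟩ => ETerm.tree S ts

/-- The V-subterms of a term. -/
def Term.vsub : Term σ → Set (VTerm σ)
  | .inl t => t.vsub
  | .inr ⟨_, ts⟩ => ⋃ j, (ts j).vsub

/-- The S-subterms of a term. -/
def Term.esub : Term σ → ∀ S : σ.symb, Set (Fin (σ.ar S) → VTerm σ)
  | .inl t => t.esub
  | .inr ⟨R, ts⟩ => fun S =>
      {us | ∃ h : R = S, us = fun j => ts (Fin.cast (congrArg σ.ar h.symm) j)} ∪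
      {us | ∃ j, us ∈ (ts j).esub S}

/-- `𝒯_V`: all V-subterms of the chosen terms `t_R`. -/
def TVs (tq : τ.symb → Term σ) : Set (VTerm σ) := ⋃ R, (tq R).vsub

/-- `𝒯_S`: all S-subterms of the chosen terms `t_R`. -/
def TEs (tq : τ.symb → Term σ) (S : σ.symb) : Set (Fin (σ.ar S) → VTerm σ) := ⋃ R, (tq R).esub S

/-- The central Pultr functor for the template where `P = Š₁` consists of a single `Š`-edge
(`Š = Sc`), `Q_R = T(tq R)`, and `ε_{i,R}` selects the `Š`-edge `x R i` of `Q_R`. -/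
def GammaE (Sc : σ.symb) (tq : τ.symb → Term σ)
    (x : ∀ R : τ.symb, Fin (τ.ar R) → (Fin (σ.ar Sc) → ((tq R).tree).dom))
    (A : Struct σ) : Struct τ where
  dom := {e : Fin (σ.ar Sc) → A.dom // e ∈ A.rel Sc}
  rel R := {y | ∃ h : ((tq R).tree).dom → A.dom, IsHom ((tq R).tree) A h ∧
      ∀ i, (y i).1 = fun j => h (x R i j)}

/-- Domain of `Ω(B)`: tuples of sets of homomorphisms `Γ(T(t)) → B`, indexed by `t ∈ 𝒯_V`,
whose entry at `vertex` is `{∅}` (the set containing the empty map, i.e. the full set of maps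
from the empty domain of `Γ(T(vertex))`). -/
def OmEDom (Sc : σ.symb) (tq : τ.symb → Term σ)
    (x : ∀ R : τ.symb, Fin (τ.ar R) → (Fin (σ.ar Sc) → ((tq R).tree).dom))
    (B : Struct τ) : Type :=
  {U : (t : {t : VTerm σ // t ∈ TVs tq}) → Set ((GammaE Sc tq x t.1.tree).dom → B.dom) //
    (∀ t, ∀ f ∈ U t, IsHom (GammaE Sc tq x t.1.tree) B f) ∧
    (∀ h : VTerm.vertex ∈ TVs tq, U ⟨.vertex, h⟩ = Set.univ)}

open Classical in
/-- The entry of `U` at the V-term `t` (by convention `∅` if `t ∉ 𝒯_V`). -/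
noncomputable def UextE (Sc : σ.symb) (tq : τ.symb → Term σ)
    (x : ∀ R : τ.symb, Fin (τ.ar R) → (Fin (σ.ar Sc) → ((tq R).tree).dom))
    (B : Struct τ) (U : OmEDom Sc tq x B) (t : VTerm σ) :
    Set ((GammaE Sc tq x t.tree).dom → B.dom) :=
  if h : t ∈ TVs tq then U.1 ⟨t, h⟩ else ∅

/-- Restriction of a map defined on the `Š`-edges of `T(edge_S(ts))` to the `Š`-edges of the
`i`-th subtree. -/
def restrE (Sc : σ.symb) (tq : τ.symb → Term σ)
    (x : ∀ R : τ.symb, Fin (τ.ar R) → (Fin (σ.ar Sc) → ((tq R).tree).dom))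
    (B : Struct τ) (S : σ.symb) (ts : Fin (σ.ar S) → VTerm σ) (i : Fin (σ.ar S))
    (g : (GammaE Sc tq x (ETerm.tree S ts)).dom → B.dom) :
    (GammaE Sc tq x (ts i).tree).dom → B.dom :=
  fun y => g ⟨fun j => ⟨i, y.1 j⟩, Or.inl ⟨i, y.1, y.2, rfl⟩⟩

/-- `⨉_t(Us) = {f₁ ∪ ⋯ ∪ f_k : f_i ∈ (Us i)_{ts i}}` for the S-term `t = edge_S(ts)` with
`S ≠ Š`: maps on the `Š`-edges of `T(t)` all of whose restrictions lie in the prescribed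
sets. -/
def timesNE (Sc : σ.symb) (tq : τ.symb → Term σ)
    (x : ∀ R : τ.symb, Fin (τ.ar R) → (Fin (σ.ar Sc) → ((tq R).tree).dom))
    (B : Struct τ) (S : σ.symb) (ts : Fin (σ.ar S) → VTerm σ)
    (Us : Fin (σ.ar S) → OmEDom Sc tq x B) :
    Set ((GammaE Sc tq x (ETerm.tree S ts)).dom → B.dom) :=
  {g | ∀ i, restrE Sc tq x B S ts i g ∈ UextE Sc tq x B (Us i) (ts i)}

theorem rootEdgeMem (Sc : σ.symb) (ts : Fin (σ.ar Sc) → VTerm σ) :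
    edgeRoot Sc ts ∈ (ETerm.tree Sc ts).rel Sc :=
  Or.inr ⟨rfl, rfl⟩

/-- `⨉_t(Us; e) = {f₁ ∪ ⋯ ∪ f_k ∪ (r_t ↦ e) : f_i ∈ (Us i)_{ts i}}` for the `Š`-term
`t = edge_Š(ts)` with witness `e`. -/
def timesW (Sc : σ.symb) (tq : τ.symb → Term σ)
    (x : ∀ R : τ.symb, Fin (τ.ar R) → (Fin (σ.ar Sc) → ((tq R).tree).dom))
    (B : Struct τ) (ts : Fin (σ.ar Sc) → VTerm σ)
    (Us : Fin (σ.ar Sc) → OmEDom Sc tq x B) (e : B.dom) :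
    Set ((GammaE Sc tq x (ETerm.tree Sc ts)).dom → B.dom) :=
  {g | (∀ i, restrE Sc tq x B Sc ts i g ∈ UextE Sc tq x B (Us i) (ts i)) ∧
       g ⟨edgeRoot Sc ts, rootEdgeMem Sc ts⟩ = e}

/-- `e ∈ B` is a witness for the tuple `Us` of elements of `Ω(B)`: conditions (B1) and (B2). -/
def IsWitness (Sc : σ.symb) (tq : τ.symb → Term σ)
    (x : ∀ R : τ.symb, Fin (τ.ar R) → (Fin (σ.ar Sc) → ((tq R).tree).dom))
    (B : Struct τ) (Us : Fin (σ.ar Sc) → OmEDom Sc tq x B) (e : B.dom) : Prop :=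
  ∀ ts ∈ TEs tq Sc,
    (∀ i : Fin (σ.ar Sc), VTerm.pr Sc i ts ∈ TVs tq →
        ∀ g ∈ timesW Sc tq x B ts Us e, g ∈ UextE Sc tq x B (Us i) (.pr Sc i ts)) ∧
    (∀ g ∈ timesW Sc tq x B ts Us e, IsHom (GammaE Sc tq x (ETerm.tree Sc ts)) B g)

/-- The right adjoint `Ω` for the template with `P = Š₁`. -/
noncomputable def OmegaE (Sc : σ.symb) (tq : τ.symb → Term σ)
    (x : ∀ R : τ.symb, Fin (τ.ar R) → (Fin (σ.ar Sc) → ((tq R).tree).dom))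
    (B : Struct τ) : Struct σ where
  dom := OmEDom Sc tq x B
  rel S := {Us |
    (S ≠ Sc →
      (∀ ts ∈ TEs tq S, ∀ i : Fin (σ.ar S), VTerm.pr S i ts ∈ TVs tq →
          ∀ g ∈ timesNE Sc tq x B S ts Us, g ∈ UextE Sc tq x B (Us i) (.pr S i ts)) ∧
      (∀ ts ∈ TEs tq S, ∀ g ∈ timesNE Sc tq x B S ts Us,
          IsHom (GammaE Sc tq x (ETerm.tree S ts)) B g)) ∧
    (∀ heq : S = Sc, ∃ e : B.dom,
        IsWitness Sc tq x B (fun j => Us (Fin.cast (congrArg σ.ar heq.symm) j)) e)}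

theorem IsHom.comp {A B C : Struct σ} {g : B.dom → C.dom} {h : A.dom → B.dom}
    (hg : IsHom B C g) (hh : IsHom A B h) : IsHom A C (g ∘ h) :=
  fun R y hy => hg R _ (hh R y hy)

theorem ETerm.isHom_glue {A : Struct σ} {S : σ.symb} {ts : Fin (σ.ar S) → VTerm σ}
    {k : ∀ i, (ts i).tree.dom → A.dom} (hk : ∀ i, IsHom (ts i).tree A (k i))
    (hroot : (fun i => k i (ts i).root) ∈ A.rel S) :
    IsHom (ETerm.tree S ts) A (fun v => k v.1 v.2) := by
  rintro R _ (⟨i, y, hy, rfl⟩ | ⟨rfl, rfl⟩)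
  · exact hk i R y hy
  · exact hroot

section Pultr

variable {Sc : σ.symb} {tq : τ.symb → Term σ}
  {x : ∀ R : τ.symb, Fin (τ.ar R) → (Fin (σ.ar Sc) → ((tq R).tree).dom)}
  {A : Struct σ} {B : Struct τ}

namespace GammaE

/-- The action `h^Š : Γ(A') → Γ(A)` of `Γ` on a homomorphism `h : A' → A`. -/
def map {A' : Struct σ} {h : A'.dom → A.dom} (hh : IsHom A' A h)
    (e : (GammaE Sc tq x A').dom) : (GammaE Sc tq x A).dom :=
  ⟨fun j => h (e.1 j), hh Sc e.1 e.2⟩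

theorem isHom_map {A' : Struct σ} {h : A'.dom → A.dom} (hh : IsHom A' A h) :
    IsHom (GammaE Sc tq x A') (GammaE Sc tq x A) (map hh) := by
  rintro R y ⟨q, hq, hy⟩
  exact ⟨h ∘ q, hh.comp hq, fun i => congrArg (h ∘ ·) (hy i)⟩

theorem eq_of_restrE_eq {S : σ.symb} {ts : Fin (σ.ar S) → VTerm σ}
    {d d' : (GammaE Sc tq x (ETerm.tree S ts)).dom → B.dom}
    (hrestr : ∀ i, restrE Sc tq x B S ts i d = restrE Sc tq x B S ts i d')
    (hroot : ∀ (h : S = Sc) (e : (GammaE Sc tq x (ETerm.tree S ts)).dom),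
      (e.1 = fun j => edgeRoot S ts (Fin.cast (congrArg σ.ar h.symm) j)) → d e = d' e) :
    d = d' := by
  funext ⟨e, he⟩
  obtain ⟨i, y, hy, rfl⟩ | ⟨h, hy⟩ := id he
  · exact congrFun (hrestr i) ⟨y, hy⟩
  · exact hroot h _ hy

end GammaE

/-- The set `g(u)_t = {f ∘ h^Š : h : T(t) → A a homomorphism with h(r_t) = u}` for a V-term `t`. -/
def vertexPullbacks (f : (GammaE Sc tq x A).dom → B.dom) (u : A.dom) (t : VTerm σ) :
    Set ((GammaE Sc tq x t.tree).dom → B.dom) :=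
  {d | ∃ h, ∃ hh : IsHom t.tree A h, h t.root = u ∧ d = f ∘ GammaE.map hh}

/-- The analogue of `vertexPullbacks` for the S-term `t = edge_S(ts)`: the maps `f ∘ h^Š` for
homomorphisms `h : T(t) → A` sending the root edge to the tuple `u`. -/
def edgePullbacks (f : (GammaE Sc tq x A).dom → B.dom) {S : σ.symb} (u : Fin (σ.ar S) → A.dom)
    (ts : Fin (σ.ar S) → VTerm σ) : Set ((GammaE Sc tq x (ETerm.tree S ts)).dom → B.dom) :=
  {d | ∃ h, ∃ hh : IsHom (ETerm.tree S ts) A h,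
    (∀ i, h (edgeRoot S ts i) = u i) ∧ d = f ∘ GammaE.map hh}

section Pullbacks

variable {f : (GammaE Sc tq x A).dom → B.dom}

theorem isHom_of_mem_vertexPullbacks (hf : IsHom (GammaE Sc tq x A) B f) {u : A.dom}
    {t : VTerm σ} {d : (GammaE Sc tq x t.tree).dom → B.dom} (hd : d ∈ vertexPullbacks f u t) :
    IsHom (GammaE Sc tq x t.tree) B d := by
  obtain ⟨h, hh, -, rfl⟩ := hd
  exact hf.comp (GammaE.isHom_map hh)

theorem vertexPullbacks_vertex (u : A.dom) : vertexPullbacks f u .vertex = Set.univ :=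
  Set.eq_univ_of_forall fun _ =>
    ⟨fun _ => u, fun _ _ hy => hy.elim, rfl, funext fun e => e.2.elim⟩

variable {S : σ.symb} {u : Fin (σ.ar S) → A.dom} {ts : Fin (σ.ar S) → VTerm σ}

theorem isHom_of_mem_edgePullbacks (hf : IsHom (GammaE Sc tq x A) B f)
    {d : (GammaE Sc tq x (ETerm.tree S ts)).dom → B.dom} (hd : d ∈ edgePullbacks f u ts) :
    IsHom (GammaE Sc tq x (ETerm.tree S ts)) B d := by
  obtain ⟨h, hh, -, rfl⟩ := hd
  exact hf.comp (GammaE.isHom_map hh)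

-- `T(pr_i(t))` and `T(t)` are definitionally the same tree, with different roots.
theorem edgePullbacks_subset_vertexPullbacks_pr (i : Fin (σ.ar S)) :
    edgePullbacks f u ts ⊆ vertexPullbacks f (u i) (.pr S i ts) := by
  rintro d ⟨h, hh, hroot, hd⟩
  exact ⟨h, hh, hroot i, hd⟩

theorem exists_mem_edgePullbacks_restrE_eq (hu : u ∈ A.rel S)
    {d : (GammaE Sc tq x (ETerm.tree S ts)).dom → B.dom}
    (hd : ∀ i, restrE Sc tq x B S ts i d ∈ vertexPullbacks f (u i) (ts i)) :
    ∃ d' ∈ edgePullbacks f u ts, ∀ i, restrE Sc tq x B S ts i d = restrE Sc tq x B S ts i d' := by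
  choose k hk hkroot hkd using hd
  have hroot : (fun i => k i (ts i).root) ∈ A.rel S := (funext hkroot : _ = u) ▸ hu
  exact ⟨_, ⟨_, ETerm.isHom_glue hk hroot, hkroot, rfl⟩, hkd⟩

theorem mem_edgePullbacks_of_ne (hS : S ≠ Sc) (hu : u ∈ A.rel S)
    {d : (GammaE Sc tq x (ETerm.tree S ts)).dom → B.dom}
    (hd : ∀ i, restrE Sc tq x B S ts i d ∈ vertexPullbacks f (u i) (ts i)) :
    d ∈ edgePullbacks f u ts := by
  obtain ⟨d', hd', hrestr⟩ := exists_mem_edgePullbacks_restrE_eq hu hd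
  rwa [GammaE.eq_of_restrE_eq hrestr fun h => absurd h hS]

theorem apply_edgeRoot_of_mem_edgePullbacks {u : Fin (σ.ar Sc) → A.dom} (hu : u ∈ A.rel Sc)
    {ts : Fin (σ.ar Sc) → VTerm σ} {d : (GammaE Sc tq x (ETerm.tree Sc ts)).dom → B.dom}
    (hd : d ∈ edgePullbacks f u ts) : d ⟨edgeRoot Sc ts, rootEdgeMem Sc ts⟩ = f ⟨u, hu⟩ := by
  obtain ⟨h, hh, hroot, rfl⟩ := hd
  exact congrArg f (Subtype.ext (funext hroot))

theorem mem_edgePullbacks_of_apply_edgeRoot {u : Fin (σ.ar Sc) → A.dom} (hu : u ∈ A.rel Sc)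
    {ts : Fin (σ.ar Sc) → VTerm σ} {d : (GammaE Sc tq x (ETerm.tree Sc ts)).dom → B.dom}
    (hd : ∀ i, restrE Sc tq x B Sc ts i d ∈ vertexPullbacks f (u i) (ts i))
    (hroot : d ⟨edgeRoot Sc ts, rootEdgeMem Sc ts⟩ = f ⟨u, hu⟩) : d ∈ edgePullbacks f u ts := by
  obtain ⟨d', hd', hrestr⟩ := exists_mem_edgePullbacks_restrE_eq hu hd
  suffices d = d' by rwa [this]
  refine GammaE.eq_of_restrE_eq hrestr fun _ e he => ?_
  obtain rfl : e = ⟨edgeRoot Sc ts, rootEdgeMem Sc ts⟩ := Subtype.ext he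
  rw [hroot, apply_edgeRoot_of_mem_edgePullbacks hu hd']

end Pullbacks

theorem mem_UextE_iff {U : OmEDom Sc tq x B} {t : VTerm σ}
    {d : (GammaE Sc tq x t.tree).dom → B.dom} :
    d ∈ UextE Sc tq x B U t ↔ ∃ ht : t ∈ TVs tq, d ∈ U.1 ⟨t, ht⟩ := by
  by_cases ht : t ∈ TVs tq <;> simp [UextE, ht]

namespace OmegaE

theorem mem_rel_of_ne {S : σ.symb} (hS : S ≠ Sc) {Us : Fin (σ.ar S) → OmEDom Sc tq x B} :
    Us ∈ (OmegaE Sc tq x B).rel S ↔ ∀ ts ∈ TEs tq S,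
      (∀ i, VTerm.pr S i ts ∈ TVs tq →
        timesNE Sc tq x B S ts Us ⊆ UextE Sc tq x B (Us i) (.pr S i ts)) ∧
      ∀ d ∈ timesNE Sc tq x B S ts Us, IsHom (GammaE Sc tq x (ETerm.tree S ts)) B d :=
  ⟨fun h ts hts => ⟨(h.1 hS).1 ts hts, (h.1 hS).2 ts hts⟩,
    fun h => ⟨fun _ => ⟨fun ts hts => (h ts hts).1, fun ts hts => (h ts hts).2⟩,
      fun heq => absurd heq hS⟩⟩

theorem mem_rel_self {Us : Fin (σ.ar Sc) → OmEDom Sc tq x B} :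
    Us ∈ (OmegaE Sc tq x B).rel Sc ↔ ∃ e, IsWitness Sc tq x B Us e :=
  ⟨fun h => h.2 rfl, fun h => ⟨fun hne => absurd rfl hne, fun _ => h⟩⟩

variable {f : (GammaE Sc tq x A).dom → B.dom} (hf : IsHom (GammaE Sc tq x A) B f)

/-- The map `g : A → Ω(B)` associated with a homomorphism `f : Γ(A) → B`. -/
def transpose (u : A.dom) : (OmegaE Sc tq x B).dom :=
  ⟨fun t => vertexPullbacks f u t.1, fun _ _ => isHom_of_mem_vertexPullbacks hf,
    fun _ => vertexPullbacks_vertex u⟩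

theorem mem_UextE_transpose_iff {u : A.dom} {t : VTerm σ}
    {d : (GammaE Sc tq x t.tree).dom → B.dom} :
    d ∈ UextE Sc tq x B (transpose hf u) t ↔ t ∈ TVs tq ∧ d ∈ vertexPullbacks f u t :=
  mem_UextE_iff.trans ⟨fun ⟨ht, hd⟩ => ⟨ht, hd⟩, fun ⟨ht, hd⟩ => ⟨ht, hd⟩⟩

theorem edgePullbacks_subset_UextE_transpose {S : σ.symb} {u : Fin (σ.ar S) → A.dom}
    {ts : Fin (σ.ar S) → VTerm σ} {i : Fin (σ.ar S)} (hi : VTerm.pr S i ts ∈ TVs tq) :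
    edgePullbacks f u ts ⊆ UextE Sc tq x B (transpose hf (u i)) (.pr S i ts) :=
  fun _ hd => (mem_UextE_transpose_iff hf).2 ⟨hi, edgePullbacks_subset_vertexPullbacks_pr i hd⟩

theorem timesNE_transpose_subset {S : σ.symb} (hS : S ≠ Sc) {u : Fin (σ.ar S) → A.dom}
    (hu : u ∈ A.rel S) (ts : Fin (σ.ar S) → VTerm σ) :
    timesNE Sc tq x B S ts (fun i => transpose hf (u i)) ⊆ edgePullbacks f u ts :=
  fun _ hd => mem_edgePullbacks_of_ne hS hu fun i => ((mem_UextE_transpose_iff hf).1 (hd i)).2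

theorem timesW_transpose_subset {u : Fin (σ.ar Sc) → A.dom} (hu : u ∈ A.rel Sc)
    (ts : Fin (σ.ar Sc) → VTerm σ) :
    timesW Sc tq x B ts (fun i => transpose hf (u i)) (f ⟨u, hu⟩) ⊆ edgePullbacks f u ts :=
  fun _ hd => mem_edgePullbacks_of_apply_edgeRoot hu
    (fun i => ((mem_UextE_transpose_iff hf).1 (hd.1 i)).2) hd.2

theorem isWitness_transpose {u : Fin (σ.ar Sc) → A.dom} (hu : u ∈ A.rel Sc) :
    IsWitness Sc tq x B (fun i => transpose hf (u i)) (f ⟨u, hu⟩) := by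
  intro ts _
  have hsub := timesW_transpose_subset hf hu ts
  exact ⟨fun _ hi => hsub.trans (edgePullbacks_subset_UextE_transpose hf hi),
    fun _ hd => isHom_of_mem_edgePullbacks hf (hsub hd)⟩

theorem isHom_transpose : IsHom A (OmegaE Sc tq x B) (transpose hf) := by
  intro S u hu
  obtain rfl | hS := eq_or_ne S Sc
  · exact mem_rel_self.2 ⟨f ⟨u, hu⟩, isWitness_transpose hf hu⟩
  · refine (mem_rel_of_ne hS).2 fun ts _ => ?_
    have hsub := timesNE_transpose_subset hf hS hu ts
    exact ⟨fun _ hi => hsub.trans (edgePullbacks_subset_UextE_transpose hf hi),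
      fun _ hd => isHom_of_mem_edgePullbacks hf (hsub hd)⟩

end OmegaE

end Pultr

/-- if `f : Γ(A) → B` is a homomorphism then
`g(u)_t = { f ∘ h^{Š} : h : T(t) → A a homomorphism with h(r_t) = u }` is a well-defined
homomorphism `g : A → Ω(B)`; in particular `Γ(A) → B` implies `A → Ω(B)`. -/
theorem omegaE_easy_direction {σ τ : Signature} (Sc : σ.symb) (tq : τ.symb → Term σ)
    (x : ∀ R : τ.symb, Fin (τ.ar R) → (Fin (σ.ar Sc) → ((tq R).tree).dom))
    (hx : ∀ R i, x R i ∈ ((tq R).tree).rel Sc)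
    (A : Struct σ) (B : Struct τ)
    (f : (GammaE Sc tq x A).dom → B.dom) (hf : IsHom (GammaE Sc tq x A) B f) :
    ∃ g : A.dom → (OmegaE Sc tq x B).dom,
      (∀ (u : A.dom) (t : {t : VTerm σ // t ∈ TVs tq}),
        (g u).1 t = {d | ∃ h : (t.1.tree).dom → A.dom, ∃ hh : IsHom t.1.tree A h,
            h t.1.root = u ∧ d = fun y => f ⟨fun j => h (y.1 j), hh Sc y.1 y.2⟩}) ∧
      IsHom A (OmegaE Sc tq x B) g := by
  exact ⟨OmegaE.transpose hf, fun _ _ => rfl, OmegaE.isHom_transpose hf⟩
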